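/- For any family of modules {Mᵢ : i ∈ I}, the X-precover completing domain of the direct sum ⊕ᵢ Mᵢ equals the intersection of the X-precover completing domains of the Mᵢ. -/

import Mathlib

open CategoryTheory

universe u

variable {R : Type u} [Ring R]

/-- `g : X₀ ⟶ N` is an `𝒳`-precover of `N`. -/
def IsPrecover (𝒳 : ModuleCat.{u} R → Prop) {X₀ N : ModuleCat.{u} R} (g : X₀ ⟶ N) : Prop :=
  𝒳 X₀ ∧ ∀ X' : ModuleCat.{u} R, 𝒳 X' → ∀ f : X' ⟶ N, ∃ h : X' ⟶ X₀, h ≫ g = f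

/-- `𝒳` is a precovering class of left `R`-modules, closed under isomorphisms,
finite direct sums and direct summands. -/
structure PrecoveringClass (𝒳 : ModuleCat.{u} R → Prop) : Prop where
  precovering : ∀ N : ModuleCat.{u} R, ∃ (X₀ : ModuleCat.{u} R) (g : X₀ ⟶ N), IsPrecover 𝒳 g
  iso_closed : ∀ A B : ModuleCat.{u} R, Nonempty (A ≅ B) → 𝒳 A → 𝒳 B
  sum_closed : ∀ A B : ModuleCat.{u} R, 𝒳 A → 𝒳 B → 𝒳 (ModuleCat.of R (↥A × ↥B))
  summand_closed : ∀ A B : ModuleCat.{u} R, 𝒳 (ModuleCat.of R (↥A × ↥B)) → 𝒳 A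

/-- `N` belongs to the `𝒳`-precover completing domain `𝒳⁻¹(M)` of `M`:
every morphism `M ⟶ N` factors through a module in `𝒳`. -/
def MemDom (𝒳 : ModuleCat.{u} R → Prop) (M N : ModuleCat.{u} R) : Prop :=
  ∀ f : M ⟶ N, ∃ (X₀ : ModuleCat.{u} R) (h : M ⟶ X₀) (k : X₀ ⟶ N), 𝒳 X₀ ∧ h ≫ k = f

theorem stmt_5 (𝒳 : ModuleCat.{u} R → Prop) (h𝒳 : PrecoveringClass 𝒳)
    (ι : Type u) (Mf : ι → ModuleCat.{u} R) (N : ModuleCat.{u} R) :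
    MemDom 𝒳 (ModuleCat.of R (DirectSum ι fun i => ↥(Mf i))) N ↔
      ∀ i, MemDom 𝒳 (Mf i) N := by
  classical
  constructor
  · intro H i f
    obtain ⟨X₀, h, k, hX, hk⟩ := H (ModuleCat.ofHom
      (f.hom ∘ₗ DirectSum.component R ι (fun i => ↥(Mf i)) i))
    refine ⟨X₀, ModuleCat.ofHom (h.hom ∘ₗ DirectSum.lof R ι (fun i => ↥(Mf i)) i), k, hX, ?_⟩
    ext x
    have := congrArg (fun g => g.hom (DirectSum.lof R ι (fun i => ↥(Mf i)) i x)) hk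
    simpa [DirectSum.component.lof_self] using this
  · intro H f
    obtain ⟨X₀, g, hX, hg⟩ := h𝒳.precovering N
    have key : ∀ i, ∃ h : Mf i ⟶ X₀,
        h ≫ g = ModuleCat.ofHom (f.hom ∘ₗ DirectSum.lof R ι (fun i => ↥(Mf i)) i) := by
      intro i
      obtain ⟨X₁, h, k, hX₁, hk⟩ := H i
        (ModuleCat.ofHom (f.hom ∘ₗ DirectSum.lof R ι (fun i => ↥(Mf i)) i))
      obtain ⟨l, hl⟩ := hg X₁ hX₁ k
      exact ⟨h ≫ l, by rw [Category.assoc, hl, hk]⟩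
    choose h hh using key
    refine ⟨X₀, ModuleCat.ofHom (DirectSum.toModule R ι X₀ fun i => (h i).hom), g, hX, ?_⟩
    apply ModuleCat.hom_ext
    apply DirectSum.linearMap_ext
    intro i
    ext x
    have := congrArg (fun g => g.hom x) (hh i)
    simpa [DirectSum.toModule_lof] using this
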